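/- arXiv:1501.07323 — 3 statements merged into one kernel-verified Lean document; each statement's English description precedes it below -/
import Mathlib

section
/- Let 1 ≤ k ≤ n, m ≥ k, and η ∈ [0,1]. With the random pre-code matrix G_pre (systematic (n,k,η) LDPC generator) and the random m×n LT matrix G_LT (i.i.d. LT rows with degree distribution Ω, independent of G_pre), the probability that the m×k product matrix G_LT·G_pre over GF(2) has rank k is at least 1 − ∑_{i=1}^{k} C(k,i) ∑_{r=i}^{n−k+i} (J(r))^m · D(i,r). -/
open Finset

noncomputable section

/-- Probability of a particular realization of a matrix with i.i.d. Bernoulli(η) entries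
(each entry equals `1` with probability `η`). -/
def preProb (η : ℝ) {l i : ℕ} (P : Matrix (Fin l) (Fin i) (ZMod 2)) : ℝ :=
  ∏ a : Fin l, ∏ b : Fin i, if P a b = 1 then η else 1 - η

/-- Probability of a particular LT row under degree distribution Ω: a degree
`d ∈ {1,...,n}` is drawn with probability `Ω d`, then the row is uniform among the
`C(n,d)` vectors of Hamming weight `d`. -/
def ltRowProb (n : ℕ) (Ω : ℕ → ℝ) (g : Fin n → ZMod 2) : ℝ :=
  if hammingNorm g = 0 then 0 else Ω (hammingNorm g) / (n.choose (hammingNorm g) : ℝ)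

/-- Probability of a particular LT matrix (i.i.d. LT rows). -/
def ltProb (n : ℕ) (Ω : ℕ → ℝ) {m : ℕ} (G : Matrix (Fin m) (Fin n) (ZMod 2)) : ℝ :=
  ∏ i : Fin m, ltRowProb n Ω (G i)

/-- The systematic pre-code generator matrix `[I_k ; P]` (identity on top of `P`). -/
def Gpre {n k : ℕ} (hkn : k ≤ n) (P : Matrix (Fin (n - k)) (Fin k) (ZMod 2)) :
    Matrix (Fin n) (Fin k) (ZMod 2) :=
  Matrix.of fun a b =>
    if ha : (a : ℕ) < k then (if (a : ℕ) = (b : ℕ) then 1 else 0)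
    else P ⟨(a : ℕ) - k, by have := a.isLt; omega⟩ b

/-- `J(r) = ∑_{d=1}^{n} Ω_d (∑_{s even, 0 ≤ s ≤ d} C(r,s) C(n−r,d−s)) / C(n,d)`. -/
def J (n : ℕ) (Ω : ℕ → ℝ) (r : ℕ) : ℝ :=
  ∑ d ∈ Finset.Icc 1 n, Ω d *
    (∑ s ∈ (Finset.range (d + 1)).filter (fun s => Even s),
        (r.choose s : ℝ) * ((n - r).choose (d - s) : ℝ)) / (n.choose d : ℝ)

/-- `D(i,r) = C(n−k, r−i) ((1+(1−2η)^i)/2)^{n−k−(r−i)} ((1−(1−2η)^i)/2)^{r−i}`. -/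
def D (n k : ℕ) (η : ℝ) (i r : ℕ) : ℝ :=
  ((n - k).choose (r - i) : ℝ) * ((1 + (1 - 2 * η) ^ i) / 2) ^ (n - k - (r - i)) *
    ((1 - (1 - 2 * η) ^ i) / 2) ^ (r - i)

/-!
If `G_LT * G_pre` has rank less than `k`, it annihilates some nonzero `x`, so the failure
probability is at most the sum over `x ≠ 0` of the probability that `G_LT * G_pre * x = 0`.

For a fixed `y` of weight `r`, an LT row of degree `d` is orthogonal to `y` exactly when it meets
the support of `y` in an even number `s` of positions, which happens for `C(r,s) C(n-r,d-s)` of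
the rows; averaging over `d` gives `J(r)`, and independence of the rows gives `J(r)^m`.

For `x` of weight `i`, the word `G_pre * x` is `x` followed by `P * x`. Each coordinate of `P * x`
is a sum of `i` independent Bernoulli(η) bits; the sign character has mean `1 - 2η` on each of
them, so this sum is odd with probability `(1 - (1-2η)^i)/2`. Thus `G_pre * x` has weight `r` with
probability `D(i,r)`, and there are `C(k,i)` choices of `x`.
-/

open scoped Matrix

lemma sum_sub_sum_filter_le_sum_filter {Θ X M : Type*} [Fintype Θ] [AddCommGroup M]
    [PartialOrder M] [IsOrderedAddMonoid M] {w : Θ → M} (hw : ∀ θ, 0 ≤ w θ) (t : Finset X)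
    (good : Θ → Prop) [DecidablePred good] (bad : X → Θ → Prop) [∀ x, DecidablePred (bad x)]
    (h : ∀ θ, ¬ good θ → ∃ x ∈ t, bad x θ) :
    ∑ θ, w θ - ∑ x ∈ t, ∑ θ with bad x θ, w θ ≤ ∑ θ with good θ, w θ := by
  simp only [sum_filter]
  rw [sum_comm, ← sum_sub_distrib]
  refine sum_le_sum fun θ _ => ?_
  have bad_nonneg : ∀ x ∈ t, 0 ≤ if bad x θ then w θ else 0 := fun x _ => by
    split_ifs
    exacts [hw θ, le_rfl]
  by_cases hθ : good θ
  · simpa only [if_pos hθ, sub_le_self_iff] using sum_nonneg bad_nonneg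
  · obtain ⟨x, hx, hbad⟩ := h θ hθ
    simpa only [if_neg hθ, sub_nonpos, if_pos hbad] using single_le_sum bad_nonneg hx

lemma sum_filter_forall_prod {ι κ R : Type*} [Fintype ι] [DecidableEq ι] [Fintype κ]
    [CommSemiring R] (p : ι → κ → Prop) [∀ i, DecidablePred (p i)]
    [DecidablePred fun f : ι → κ => ∀ i, p i (f i)] (w : ι → κ → R) :
    ∑ f ∈ ({f | ∀ i, p i (f i)} : Finset (ι → κ)), ∏ i, w i (f i)
      = ∏ i, ∑ j with p i j, w i j := by
  rw [prod_univ_sum]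
  refine sum_congr ?_ fun _ _ => rfl
  ext f
  simp only [mem_filter, mem_univ, true_and, Fintype.mem_piFinset]

lemma exists_ne_zero_mulVec_eq_zero_of_rank_ne {m k R : Type*} [Fintype k] [CommRing R]
    [Nontrivial R] {M : Matrix m k R} (hM : M.rank ≠ Fintype.card k) :
    ∃ x, x ≠ 0 ∧ M *ᵥ x = 0 := by
  contrapose! hM
  have hinj : Function.Injective M.mulVecLin :=
    (injective_iff_map_eq_zero _).mpr fun x hx => by_contra fun hx0 => hM x hx0 hx
  rw [Matrix.rank, LinearMap.finrank_range_of_inj hinj, Module.finrank_fintype_fun_eq_card]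

lemma card_filter_card_inter_card_sdiff {ι : Type*} [Fintype ι] [DecidableEq ι] (T : Finset ι)
    (s t : ℕ) :
    #{S : Finset ι | #(S ∩ T) = s ∧ #(S \ T) = t}
      = (#T).choose s * (Fintype.card ι - #T).choose t := by
  rw [← card_compl, ← card_powersetCard s T, ← card_powersetCard t Tᶜ, ← card_product]
  have inter_sdiff_union : ∀ p ∈ powersetCard s T ×ˢ powersetCard t Tᶜ,
      ((p.1 ∪ p.2) ∩ T, (p.1 ∪ p.2) \ T) = p := fun p hp => by
    obtain ⟨⟨hA, -⟩, hB, -⟩ := by simpa only [mem_product, mem_powersetCard] using hp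
    have hBT : Disjoint p.2 T := disjoint_compl_left.mono_left hB
    rw [union_inter_distrib_right, union_sdiff_distrib, inter_eq_left.mpr hA,
      sdiff_eq_empty_iff_subset.mpr hA, disjoint_iff_inter_eq_empty.mp hBT,
      sdiff_eq_self_of_disjoint hBT, union_empty, empty_union]
  refine card_nbij' (fun S => (S ∩ T, S \ T)) (fun p => p.1 ∪ p.2) ?_ ?_ ?_ inter_sdiff_union
  · intro S hS
    simp only [coe_filter, mem_univ, true_and, Set.mem_ofPred_eq] at hS
    simp only [coe_product, Set.mem_prod, mem_coe, mem_powersetCard]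
    exact ⟨⟨inter_subset_right, hS.1⟩, fun a ha => mem_compl.mpr (mem_sdiff.mp ha).2, hS.2⟩
  · intro p hp
    have hcards := by simpa only [mem_coe, mem_product, mem_powersetCard] using hp
    obtain ⟨hinter, hsdiff⟩ := Prod.ext_iff.mp (inter_sdiff_union p hp)
    simp only [coe_filter, mem_univ, true_and, Set.mem_ofPred_eq]
    exact ⟨(congrArg card hinter).trans hcards.1.2, (congrArg card hsdiff).trans hcards.2.2⟩
  · intro S _
    exact (union_comm _ _).trans (sdiff_union_inter S T)

lemma hammingNorm_comp_equiv {ι κ β : Type*} [Fintype ι] [Fintype κ] [Zero β] [DecidableEq β]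
    (e : ι ≃ κ) (x : κ → β) : hammingNorm (fun a => x (e a)) = hammingNorm x := by
  simp only [hammingNorm, card_filter]
  exact e.sum_comp fun b => if x b ≠ 0 then 1 else 0

lemma hammingNorm_sumElim {ι κ β : Type*} [Fintype ι] [Fintype κ] [Zero β] [DecidableEq β]
    (x : ι → β) (y : κ → β) :
    hammingNorm (Sum.elim x y) = hammingNorm x + hammingNorm y := by
  simp only [hammingNorm, card_filter]
  exact Fintype.sum_sum_type fun a => if Sum.elim x y a ≠ 0 then 1 else 0

section BinaryVectors

variable {ι : Type*} [Fintype ι] [DecidableEq ι]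

/-- Binary vectors correspond to subsets of the index set, a vector being sent to its support;
the Hamming norm becomes the cardinality. -/
def suppEquiv : (ι → ZMod 2) ≃ Finset ι where
  toFun x := {a | x a ≠ 0}
  invFun S := fun a => if a ∈ S then 1 else 0
  left_inv x := by
    have ite_ne_zero : ∀ u : ZMod 2, (if u ≠ 0 then (1 : ZMod 2) else 0) = u := by decide
    funext a
    simpa using ite_ne_zero (x a)
  right_inv S := by
    ext a
    simp

lemma card_suppEquiv (x : ι → ZMod 2) : #(suppEquiv x) = hammingNorm x := rfl

lemma dotProduct_eq_card_suppEquiv_inter (x y : ι → ZMod 2) :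
    x ⬝ᵥ y = (#(suppEquiv x ∩ suppEquiv y) : ZMod 2) := by
  have mul_eq_ite : ∀ u v : ZMod 2, u * v = if u ≠ 0 ∧ v ≠ 0 then 1 else 0 := by decide
  simp only [dotProduct, mul_eq_ite, sum_boole, filter_and]
  rfl

lemma card_hammingNorm_eq (d : ℕ) :
    #{x : ι → ZMod 2 | hammingNorm x = d} = (Fintype.card ι).choose d := by
  rw [← card_univ, ← card_powersetCard]
  exact card_equiv suppEquiv fun x => by simp [card_suppEquiv]

lemma card_hammingNorm_eq_and_dotProduct_eq_zero (y : ι → ZMod 2) (d : ℕ) :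
    #{x : ι → ZMod 2 | hammingNorm x = d ∧ x ⬝ᵥ y = 0}
      = ∑ s ∈ range (d + 1) with Even s,
          (hammingNorm y).choose s * (Fintype.card ι - hammingNorm y).choose (d - s) := by
  rw [card_eq_sum_card_fiberwise (f := fun x => #(suppEquiv x ∩ suppEquiv y))
    (t := {s ∈ range (d + 1) | Even s})]
  · refine sum_congr rfl fun s hs => ?_
    have hsd : s ≤ d := mem_range_succ_iff.mp (mem_filter.mp hs).1
    have hs_even : Even s := (mem_filter.mp hs).2
    rw [← card_suppEquiv y, ← card_filter_card_inter_card_sdiff]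
    refine card_equiv suppEquiv fun x => ?_
    have hadd := card_inter_add_card_sdiff (suppEquiv x) (suppEquiv y)
    simp only [mem_filter, mem_univ, true_and, dotProduct_eq_card_suppEquiv_inter,
      ZMod.natCast_eq_zero_iff_even, ← card_suppEquiv x, ← hadd]
    constructor
    · rintro ⟨⟨hd, -⟩, hinter⟩
      exact ⟨hinter, by omega⟩
    · rintro ⟨hinter, hdiff⟩
      exact ⟨⟨by omega, hinter ▸ hs_even⟩, hinter⟩
  · intro x hx
    simp only [coe_filter, mem_univ, true_and, Set.mem_ofPred_eq,
      dotProduct_eq_card_suppEquiv_inter, ZMod.natCast_eq_zero_iff_even] at hx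
    simp only [coe_filter, Set.mem_ofPred_eq, mem_range_succ_iff]
    exact ⟨(card_le_card inter_subset_left).trans hx.1.le, hx.2⟩

lemma sum_filter_hammingNorm_mem {M : Type*} [AddCommMonoid M] (t : Finset ℕ) (f : ℕ → M) :
    ∑ x : ι → ZMod 2 with hammingNorm x ∈ t, f (hammingNorm x)
      = ∑ d ∈ t, (Fintype.card ι).choose d • f d := by
  rw [← sum_fiberwise_eq_sum_filter]
  refine sum_congr rfl fun d _ => ?_
  rw [← card_hammingNorm_eq, ← sum_const]
  exact sum_congr rfl fun x hx => congrArg f (mem_filter.mp hx).2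

lemma sum_apply_hammingNorm {M : Type*} [AddCommMonoid M] (f : ℕ → M) :
    ∑ x : ι → ZMod 2, f (hammingNorm x)
      = ∑ d ∈ range (Fintype.card ι + 1), (Fintype.card ι).choose d • f d := by
  rw [← sum_filter_hammingNorm_mem, filter_true_of_mem]
  exact fun x _ => mem_range_succ_iff.mpr hammingNorm_le_card_fintype

lemma sum_ne_zero_apply_hammingNorm {M : Type*} [AddCommMonoid M] (f : ℕ → M) :
    ∑ x : ι → ZMod 2 with x ≠ 0, f (hammingNorm x)
      = ∑ d ∈ Icc 1 (Fintype.card ι), (Fintype.card ι).choose d • f d := by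
  rw [← sum_filter_hammingNorm_mem]
  congr 1
  ext x
  simp [Nat.one_le_iff_ne_zero, hammingNorm_le_card_fintype]

end BinaryVectors

section Sign

lemma sum_zmod_two {M : Type*} [AddCommMonoid M] (f : ZMod 2 → M) : ∑ u, f u = f 0 + f 1 :=
  Fin.sum_univ_two f

/-- The nontrivial additive character of `ZMod 2`, with values `1` and `-1`. It turns the parity of
a sum of independent bits into a product, whose expectation factors. -/
def signChar : AddChar (ZMod 2) ℝ := AddChar.zmodChar 2 (ζ := -1) (by norm_num)

lemma signChar_apply (u : ZMod 2) : signChar u = if u = 0 then 1 else -1 := by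
  have val_eq_ite : ∀ v : ZMod 2, v.val = if v = 0 then 0 else 1 := by decide
  rw [signChar, AddChar.zmodChar_apply, val_eq_ite]
  split_ifs <;> norm_num

lemma signChar_dotProduct {ι : Type*} [Fintype ι] (x y : ι → ZMod 2) :
    signChar (x ⬝ᵥ y) = ∏ a, signChar (x a * y a) :=
  map_prod signChar.toMonoidHom (fun a => Multiplicative.ofAdd (x a * y a)) univ

lemma ite_eq_eq_signChar (u c : ZMod 2) :
    (if u = c then (1 : ℝ) else 0) = (1 + signChar c * signChar u) / 2 := by
  have eq_iff : ∀ u c : ZMod 2, u = c ↔ (u = 0 ↔ c = 0) := by decide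
  rw [if_congr (eq_iff u c) rfl rfl]
  by_cases hu : u = 0 <;> by_cases hc : c = 0 <;> simp [signChar_apply, hu, hc]

lemma prod_one_add_signChar_mul_div_two {ι : Type*} [Fintype ι] (z : ι → ZMod 2) (ρ : ℝ) :
    ∏ a, (1 + signChar (z a) * ρ) / 2
      = ((1 + ρ) / 2) ^ (Fintype.card ι - hammingNorm z) * ((1 - ρ) / 2) ^ hammingNorm z := by
  classical
  have factor_eq_ite : ∀ a, (1 + signChar (z a) * ρ) / 2
      = if z a ≠ 0 then (1 - ρ) / 2 else (1 + ρ) / 2 := fun a => by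
    by_cases ha : z a = 0 <;> simp [signChar_apply, ha, sub_eq_add_neg]
  have card_zeros : #{a | ¬ z a ≠ 0} = Fintype.card ι - hammingNorm z := by
    rw [filter_not, ← compl_eq_univ_sdiff, card_compl]
    rfl
  rw [prod_congr rfl fun a _ => factor_eq_ite a, prod_ite, prod_const, prod_const, card_zeros,
    mul_comm]
  rfl

end Sign

section Precode

/-- Probability that a vector with i.i.d. Bernoulli(η) coordinates equals `g`; it is the law of a
single row of the parity part of the pre-code generator matrix. -/
def bernoulliWeight {ι : Type*} [Fintype ι] (η : ℝ) (g : ι → ZMod 2) : ℝ :=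
  ∏ b, if g b = 1 then η else 1 - η

section Row

variable {ι : Type*} [Fintype ι] [DecidableEq ι] (η : ℝ)

lemma sum_bernoulliWeight : ∑ g : ι → ZMod 2, bernoulliWeight η g = 1 := by
  have sum_coord : ∑ u : ZMod 2, (if u = 1 then η else 1 - η) = 1 := by
    simp [sum_zmod_two]
  simp only [bernoulliWeight]
  rw [← Fintype.prod_sum fun (_ : ι) (u : ZMod 2) => if u = 1 then η else 1 - η]
  simp only [sum_coord, prod_const_one]

lemma sum_bernoulliWeight_mul_signChar_dotProduct (x : ι → ZMod 2) :
    ∑ g, bernoulliWeight η g * signChar (g ⬝ᵥ x) = (1 - 2 * η) ^ hammingNorm x := by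
  have sum_coord : ∀ b, ∑ u : ZMod 2, (if u = 1 then η else 1 - η) * signChar (u * x b)
      = if x b ≠ 0 then 1 - 2 * η else 1 := fun b => by
    by_cases hb : x b = 0 <;> simp [sum_zmod_two, signChar_apply, hb]
    ring
  simp only [bernoulliWeight, signChar_dotProduct, ← prod_mul_distrib]
  rw [← Fintype.prod_sum fun b (u : ZMod 2) => (if u = 1 then η else 1 - η) * signChar (u * x b)]
  simp only [sum_coord]
  rw [prod_ite, prod_const, prod_const_one, mul_one]
  rfl

lemma sum_dotProduct_eq_bernoulliWeight (x : ι → ZMod 2) (c : ZMod 2) :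
    ∑ g with g ⬝ᵥ x = c, bernoulliWeight η g
      = (1 + signChar c * (1 - 2 * η) ^ hammingNorm x) / 2 := by
  calc ∑ g with g ⬝ᵥ x = c, bernoulliWeight η g
      = ∑ g, bernoulliWeight η g * ((1 + signChar c * signChar (g ⬝ᵥ x)) / 2) := by
        simp only [sum_filter, ← ite_eq_eq_signChar, mul_ite, mul_one, mul_zero]
    _ = (∑ g : ι → ZMod 2, bernoulliWeight η g
          + signChar c * ∑ g, bernoulliWeight η g * signChar (g ⬝ᵥ x)) / 2 := by
        rw [mul_sum, ← sum_add_distrib, sum_div]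
        exact sum_congr rfl fun g _ => by ring
    _ = (1 + signChar c * (1 - 2 * η) ^ hammingNorm x) / 2 := by
        rw [sum_bernoulliWeight, sum_bernoulliWeight_mul_signChar_dotProduct]

end Row

variable {l k : ℕ} (η : ℝ)

lemma sum_preProb : ∑ P : Matrix (Fin l) (Fin k) (ZMod 2), preProb η P = 1 :=
  calc ∑ P : Matrix (Fin l) (Fin k) (ZMod 2), preProb η P
      = ∏ _a : Fin l, ∑ g : Fin k → ZMod 2, bernoulliWeight η g :=
        (Fintype.prod_sum fun _ => bernoulliWeight η).symm
    _ = 1 := by simp only [sum_bernoulliWeight, prod_const_one]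

lemma sum_mulVec_eq_preProb (x : Fin k → ZMod 2) (z : Fin l → ZMod 2) :
    ∑ P : Matrix (Fin l) (Fin k) (ZMod 2) with P *ᵥ x = z, preProb η P
      = ((1 + (1 - 2 * η) ^ hammingNorm x) / 2) ^ (l - hammingNorm z)
        * ((1 - (1 - 2 * η) ^ hammingNorm x) / 2) ^ hammingNorm z := by
  simp only [funext_iff]
  refine (sum_filter_forall_prod (fun a g => g ⬝ᵥ x = z a) fun _ => bernoulliWeight η).trans ?_
  simp only [sum_dotProduct_eq_bernoulliWeight, prod_one_add_signChar_mul_div_two,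
    Fintype.card_fin]

lemma sum_preProb_mul_hammingNorm_mulVec (x : Fin k → ZMod 2) (f : ℕ → ℝ) :
    ∑ P : Matrix (Fin l) (Fin k) (ZMod 2), preProb η P * f (hammingNorm (P *ᵥ x))
      = ∑ t ∈ range (l + 1), (l.choose t : ℝ)
        * (((1 + (1 - 2 * η) ^ hammingNorm x) / 2) ^ (l - t)
          * ((1 - (1 - 2 * η) ^ hammingNorm x) / 2) ^ t * f t) := by
  rw [← sum_fiberwise univ fun P : Matrix (Fin l) (Fin k) (ZMod 2) => P *ᵥ x]
  have sum_fiber : ∀ z : Fin l → ZMod 2,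
      ∑ P : Matrix (Fin l) (Fin k) (ZMod 2) with P *ᵥ x = z,
          preProb η P * f (hammingNorm (P *ᵥ x))
        = ((1 + (1 - 2 * η) ^ hammingNorm x) / 2) ^ (l - hammingNorm z)
          * ((1 - (1 - 2 * η) ^ hammingNorm x) / 2) ^ hammingNorm z * f (hammingNorm z) :=
    fun z => by
      rw [← sum_mulVec_eq_preProb, sum_mul]
      exact sum_congr rfl fun P hP => by rw [(mem_filter.mp hP).2]
  rw [sum_congr rfl fun z _ => sum_fiber z, sum_apply_hammingNorm fun t =>
    ((1 + (1 - 2 * η) ^ hammingNorm x) / 2) ^ (l - t)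
      * ((1 - (1 - 2 * η) ^ hammingNorm x) / 2) ^ t * f t]
  simp only [Fintype.card_fin, nsmul_eq_mul]

lemma hammingNorm_Gpre_mulVec {n : ℕ} (hkn : k ≤ n) (P : Matrix (Fin (n - k)) (Fin k) (ZMod 2))
    (x : Fin k → ZMod 2) :
    hammingNorm (Gpre hkn P *ᵥ x) = hammingNorm x + hammingNorm (P *ᵥ x) := by
  let e : Fin k ⊕ Fin (n - k) ≃ Fin n :=
    finSumFinEquiv.trans (finCongr (Nat.add_sub_cancel' hkn))
  have mulVec_comp : (fun a => (Gpre hkn P *ᵥ x) (e a)) = Sum.elim x (P *ᵥ x) := by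
    funext a
    rcases a with a | a <;> simp [e, Matrix.mulVec, dotProduct, Gpre, Fin.val_inj]
  rw [← hammingNorm_comp_equiv e, mulVec_comp, hammingNorm_sumElim]

lemma sum_preProb_mul_hammingNorm_Gpre_mulVec {n : ℕ} (hkn : k ≤ n) (x : Fin k → ZMod 2)
    (f : ℕ → ℝ) :
    ∑ P : Matrix (Fin (n - k)) (Fin k) (ZMod 2),
        preProb η P * f (hammingNorm (Gpre hkn P *ᵥ x))
      = ∑ r ∈ Icc (hammingNorm x) (n - k + hammingNorm x), f r * D n k η (hammingNorm x) r := by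
  simp only [hammingNorm_Gpre_mulVec]
  rw [sum_preProb_mul_hammingNorm_mulVec η x fun t => f (hammingNorm x + t),
    range_eq_Ico]
  refine sum_nbij' (hammingNorm x + ·) (· - hammingNorm x) ?_ ?_
    (fun _ _ => Nat.add_sub_cancel_left _ _) ?_ ?_ <;>
    simp only [mem_Ico, mem_Icc, Nat.add_sub_cancel_left, D]
  · intros; omega
  · intros; omega
  · intros; omega
  · intros; ring

lemma preProb_nonneg (hη0 : 0 ≤ η) (hη1 : η ≤ 1) (P : Matrix (Fin l) (Fin k) (ZMod 2)) :
    0 ≤ preProb η P := by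
  refine prod_nonneg fun a _ => prod_nonneg fun b _ => ?_
  split_ifs <;> linarith

end Precode

section LT

variable {n : ℕ} (Ω : ℕ → ℝ)

lemma sum_filter_ltRowProb (p : (Fin n → ZMod 2) → Prop) [DecidablePred p] :
    ∑ g with p g, ltRowProb n Ω g
      = ∑ d ∈ Icc 1 n, Ω d * #{g : Fin n → ZMod 2 | hammingNorm g = d ∧ p g} / n.choose d := by
  have mem_Icc_of_ne_zero : ∀ g ∈ ({g | p g} : Finset (Fin n → ZMod 2)), ltRowProb n Ω g ≠ 0 →
      hammingNorm g ∈ Icc 1 n := fun g _ hg => by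
    have hle : hammingNorm g ≤ n := by simpa using hammingNorm_le_card_fintype (x := g)
    have hne : hammingNorm g ≠ 0 := fun h0 => hg (if_pos h0)
    exact mem_Icc.mpr ⟨Nat.one_le_iff_ne_zero.mpr hne, hle⟩
  rw [← sum_filter_of_ne mem_Icc_of_ne_zero, ← sum_fiberwise_eq_sum_filter]
  refine sum_congr rfl fun d hd => ?_
  have hd0 : d ≠ 0 := Nat.one_le_iff_ne_zero.mp (mem_Icc.mp hd).1
  have apply_eq : ∀ g ∈ ({g | p g} : Finset (Fin n → ZMod 2)).filter (hammingNorm · = d),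
      ltRowProb n Ω g = Ω d / n.choose d := fun g hg => by
    simp only [ltRowProb, (mem_filter.mp hg).2, if_neg hd0]
  rw [sum_congr rfl apply_eq, sum_const, filter_filter, nsmul_eq_mul]
  simp only [and_comm (a := p _)]
  ring

lemma sum_ltRowProb : ∑ g, ltRowProb n Ω g = ∑ d ∈ Icc 1 n, Ω d := by
  have h := sum_filter_ltRowProb (n := n) Ω fun _ => True
  simp only [filter_true, and_true, card_hammingNorm_eq, Fintype.card_fin] at h
  refine h.trans (sum_congr rfl fun d hd => ?_)
  have hchoose : (n.choose d : ℝ) ≠ 0 :=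
    Nat.cast_ne_zero.mpr (Nat.choose_pos (mem_Icc.mp hd).2).ne'
  exact mul_div_cancel_right₀ _ hchoose

lemma sum_dotProduct_eq_zero_ltRowProb (y : Fin n → ZMod 2) :
    ∑ g with g ⬝ᵥ y = 0, ltRowProb n Ω g = J n Ω (hammingNorm y) := by
  rw [sum_filter_ltRowProb]
  simp only [card_hammingNorm_eq_and_dotProduct_eq_zero, Fintype.card_fin, J, Nat.cast_sum,
    Nat.cast_mul]

variable {m : ℕ}

lemma sum_ltProb :
    ∑ G : Matrix (Fin m) (Fin n) (ZMod 2), ltProb n Ω G = (∑ d ∈ Icc 1 n, Ω d) ^ m :=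
  calc ∑ G : Matrix (Fin m) (Fin n) (ZMod 2), ltProb n Ω G
      = ∏ _a : Fin m, ∑ g, ltRowProb n Ω g :=
        (Fintype.prod_sum fun _ => ltRowProb n Ω).symm
    _ = (∑ d ∈ Icc 1 n, Ω d) ^ m := by
        rw [sum_ltRowProb, prod_const, card_univ, Fintype.card_fin]

lemma sum_mulVec_eq_zero_ltProb (y : Fin n → ZMod 2) :
    ∑ G : Matrix (Fin m) (Fin n) (ZMod 2) with G *ᵥ y = 0, ltProb n Ω G
      = J n Ω (hammingNorm y) ^ m := by
  simp only [funext_iff]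
  refine (sum_filter_forall_prod (fun _ g => g ⬝ᵥ y = 0) fun _ => ltRowProb n Ω).trans ?_
  rw [sum_dotProduct_eq_zero_ltRowProb, prod_const, card_univ, Fintype.card_fin]

variable {Ω}

lemma ltProb_nonneg (hΩ : ∀ d ∈ Icc 1 n, 0 ≤ Ω d) (G : Matrix (Fin m) (Fin n) (ZMod 2)) :
    0 ≤ ltProb n Ω G := by
  refine prod_nonneg fun a _ => ?_
  unfold ltRowProb
  split_ifs with h0
  · exact le_rfl
  · have hle : hammingNorm (G a) ≤ n := by simpa using hammingNorm_le_card_fintype (x := G a)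
    exact div_nonneg (hΩ _ (mem_Icc.mpr ⟨Nat.one_le_iff_ne_zero.mpr h0, hle⟩)) (Nat.cast_nonneg _)

lemma sub_sum_J_pow_le_sum_rank_eq_ltProb {k : ℕ} (hΩ : ∀ d ∈ Icc 1 n, 0 ≤ Ω d)
    (H : Matrix (Fin n) (Fin k) (ZMod 2)) :
    (∑ d ∈ Icc 1 n, Ω d) ^ m - ∑ x with x ≠ 0, J n Ω (hammingNorm (H *ᵥ x)) ^ m
      ≤ ∑ G : Matrix (Fin m) (Fin n) (ZMod 2) with (G * H).rank = k, ltProb n Ω G := by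
  simp only [← sum_ltProb, ← sum_mulVec_eq_zero_ltProb]
  refine sum_sub_sum_filter_le_sum_filter (ltProb_nonneg hΩ) _ _ _ fun G hG => ?_
  obtain ⟨x, hx0, hx⟩ := exists_ne_zero_mulVec_eq_zero_of_rank_ne (M := G * H) (by simpa using hG)
  exact ⟨x, by simpa using hx0, by rw [Matrix.mulVec_mulVec, hx]⟩

end LT

theorem raptor_ml_decoding_success_lower_bound_general
    (n k m : ℕ) (η : ℝ) (Ω : ℕ → ℝ) (hkn : k ≤ n)
    (hη0 : 0 ≤ η) (hη1 : η ≤ 1)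
    (hΩpos : ∀ d ∈ Icc 1 n, 0 ≤ Ω d) :
    (∑ d ∈ Icc 1 n, Ω d) ^ m - ∑ i ∈ Icc 1 k, (k.choose i : ℝ) *
          ∑ r ∈ Icc i (n - k + i), (J n Ω r) ^ m * D n k η i r
      ≤ ∑ P : Matrix (Fin (n - k)) (Fin k) (ZMod 2),
          ∑ G : Matrix (Fin m) (Fin n) (ZMod 2),
            if (G * Gpre hkn P).rank = k then preProb η P * ltProb n Ω G else 0 := by
  set kerProb : ℕ → ℝ := fun i => ∑ r ∈ Icc i (n - k + i), J n Ω r ^ m * D n k η i r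
  calc (∑ d ∈ Icc 1 n, Ω d) ^ m - ∑ i ∈ Icc 1 k, (k.choose i : ℝ) * kerProb i
      = (∑ d ∈ Icc 1 n, Ω d) ^ m
          - ∑ x : Fin k → ZMod 2 with x ≠ 0, kerProb (hammingNorm x) := by
        simp only [sum_ne_zero_apply_hammingNorm, Fintype.card_fin, nsmul_eq_mul]
    _ = ∑ P : Matrix (Fin (n - k)) (Fin k) (ZMod 2), preProb η P
          * ((∑ d ∈ Icc 1 n, Ω d) ^ m
            - ∑ x with x ≠ 0, J n Ω (hammingNorm (Gpre hkn P *ᵥ x)) ^ m) := by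
        simp only [kerProb, ← sum_preProb_mul_hammingNorm_Gpre_mulVec η hkn _ (J n Ω · ^ m)]
        simp only [mul_sub, sum_sub_distrib, ← sum_mul, sum_preProb, one_mul, mul_sum]
        rw [sum_comm]
    _ ≤ ∑ P : Matrix (Fin (n - k)) (Fin k) (ZMod 2), preProb η P
          * ∑ G : Matrix (Fin m) (Fin n) (ZMod 2) with (G * Gpre hkn P).rank = k,
              ltProb n Ω G :=
        sum_le_sum fun P _ => mul_le_mul_of_nonneg_left
          (sub_sum_J_pow_le_sum_rank_eq_ltProb hΩpos _) (preProb_nonneg η hη0 hη1 P)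
    _ = _ := by simp only [mul_sum, sum_filter, mul_ite, mul_zero]

/-- Theorem 1, lower bound on the decoding success probability of Raptor
codes under ML decoding: the probability that the `m × k` product matrix
`G_LT * G_pre` over GF(2) has rank `k` is at least
`1 − ∑_{i=1}^{k} C(k,i) ∑_{r=i}^{n−k+i} (J(r))^m D(i,r)`. -/
theorem raptor_ml_decoding_success_lower_bound
    (n k m : ℕ) (η : ℝ) (Ω : ℕ → ℝ)
    (hk : 1 ≤ k) (hkn : k ≤ n) (hm : k ≤ m)
    (hη0 : 0 ≤ η) (hη1 : η ≤ 1)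
    (hΩpos : ∀ d ∈ Finset.Icc 1 n, 0 ≤ Ω d)
    (hΩsum : ∑ d ∈ Finset.Icc 1 n, Ω d = 1) :
    1 - ∑ i ∈ Finset.Icc 1 k, (k.choose i : ℝ) *
          ∑ r ∈ Finset.Icc i (n - k + i), (J n Ω r) ^ m * D n k η i r
      ≤ ∑ P : Matrix (Fin (n - k)) (Fin k) (ZMod 2),
          ∑ G : Matrix (Fin m) (Fin n) (ZMod 2),
            if (G * Gpre hkn P).rank = k then preProb η P * ltProb n Ω G else 0 := by
  simpa only [hΩsum, one_pow] using
    raptor_ml_decoding_success_lower_bound_general n k m η Ω hkn hη0 hη1 hΩpos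
end
end

section
/- Let 1 ≤ k ≤ n and m ≥ 1. Over GF(2), let P be an arbitrary (n−k)×k matrix, let G_pre = [I_k ; P] be the n×k matrix whose top block is the k×k identity and whose bottom block is P, and let H = [P | I_{n−k}] be the (n−k)×n matrix whose left block is P and whose right block is the (n−k)×(n−k) identity. Then for every m×n matrix G_LT over GF(2), the (m+n−k)×n matrix obtained by stacking G_LT on top of H has rank n if and only if the m×k matrix G_LT·G_pre has rank k. -/
/-!
The columns of `Gpre` form a basis of the kernel of `Hmat`. Hence the kernel of `G` stacked on
`Hmat`, which is the intersection of the kernels of `G` and `Hmat`, is the isomorphic image under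
`Gpre` of the kernel of `G * Gpre`, and rank–nullity compares the two ranks.
-/

open Finset

noncomputable section

/-- The parity-check matrix `H = [P | I_{n−k}]` (`P` on the left of the identity). -/
def Hmat {n k : ℕ} (hkn : k ≤ n) (P : Matrix (Fin (n - k)) (Fin k) (ZMod 2)) :
    Matrix (Fin (n - k)) (Fin n) (ZMod 2) :=
  Matrix.of fun a b =>
    if hb : (b : ℕ) < k then P a ⟨(b : ℕ), hb⟩
    else if (b : ℕ) - k = (a : ℕ) then 1 else 0

open Matrix

section Kernel

variable {R ι κ μ ν : Type*} [CommSemiring R] [Fintype ι] [Fintype κ]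
  {E : Matrix ι κ R} {H : Matrix ν ι R}

theorem ker_mulVecLin_fromRows_of_exact (hEH : Function.Exact E.mulVec H.mulVec)
    (G : Matrix μ ι R) :
    LinearMap.ker (fromRows G H).mulVecLin =
      (LinearMap.ker (G * E).mulVecLin).map E.mulVecLin := by
  ext v
  have mem_ker_iff : v ∈ LinearMap.ker (fromRows G H).mulVecLin ↔ G *ᵥ v = 0 ∧ H *ᵥ v = 0 := by
    simp [fromRows_mulVec, funext_iff]
  rw [mem_ker_iff, hEH v]
  constructor
  · rintro ⟨hG, u, rfl⟩
    exact ⟨u, by simpa using hG, rfl⟩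
  · rintro ⟨u, hu, rfl⟩
    exact ⟨by simpa using hu, u, rfl⟩

end Kernel

section RankNullity

variable {R ι κ μ ν : Type*} [CommRing R] [IsDomain R] [Fintype ι] [Fintype κ]
  {E : Matrix ι κ R} {H : Matrix ν ι R}

theorem rank_add_finrank_ker_mulVecLin (A : Matrix ν ι R) :
    A.rank + Module.finrank R (LinearMap.ker A.mulVecLin) = Fintype.card ι := by
  rw [rank, ← A.mulVecLin.quotKerEquivRange.finrank_eq, Submodule.finrank_quotient_add_finrank,
    Module.finrank_fintype_fun_eq_card]

theorem rank_fromRows_add_card_of_exact (hE : Function.Injective E.mulVec)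
    (hEH : Function.Exact E.mulVec H.mulVec) (G : Matrix μ ι R) :
    (fromRows G H).rank + Fintype.card κ = (G * E).rank + Fintype.card ι := by
  have finrank_ker_eq : Module.finrank R (LinearMap.ker (fromRows G H).mulVecLin) =
      Module.finrank R (LinearMap.ker (G * E).mulVecLin) := by
    rw [ker_mulVecLin_fromRows_of_exact hEH]
    exact (Submodule.equivMapOfInjective _ hE _).finrank_eq.symm
  have stacked := rank_add_finrank_ker_mulVecLin (fromRows G H)
  have product := rank_add_finrank_ker_mulVecLin (G * E)
  lia

theorem stack_full_rank_iff_product_full_rank_general (hE : Function.Injective E.mulVec)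
    (hEH : Function.Exact E.mulVec H.mulVec) (G : Matrix μ ι R) :
    (fromRows G H).rank = Fintype.card ι ↔ (G * E).rank = Fintype.card κ := by
  have := rank_fromRows_add_card_of_exact hE hEH G
  lia

end RankNullity

section Systematic

variable {R κ ρ : Type*} [Fintype κ] [DecidableEq κ]

theorem mulVec_fromRows_one_injective [Semiring R] (A : Matrix ρ κ R) :
    Function.Injective (fromRows (1 : Matrix κ κ R) A).mulVec := by
  intro u v huv
  simpa [fromRows_mulVec] using congrArg (· ∘ Sum.inl) huv

theorem exact_mulVec_fromRows_one_neg_fromCols_one [Ring R] [Fintype ρ] [DecidableEq ρ]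
    (P : Matrix ρ κ R) :
    Function.Exact (fromRows (1 : Matrix κ κ R) (-P)).mulVec
      (fromCols P (1 : Matrix ρ ρ R)).mulVec := by
  intro v
  rw [fromCols_mulVec, one_mulVec, add_eq_zero_iff_neg_eq]
  constructor
  · intro hv
    refine ⟨v ∘ Sum.inl, ?_⟩
    rw [fromRows_mulVec, one_mulVec, neg_mulVec, hv, Sum.elim_comp_inl_inr]
  · rintro ⟨u, rfl⟩
    simp [fromRows_mulVec, neg_mulVec]

end Systematic

section Reindex

variable {R ι ι' κ ν : Type*} [NonUnitalNonAssocSemiring R] [Fintype κ]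
  {E : Matrix ι κ R} {H : Matrix ν ι R}

theorem mulVec_submatrix_injective (hE : Function.Injective E.mulVec) {f : ι' → ι}
    (hf : Function.Surjective f) : Function.Injective (E.submatrix f id).mulVec :=
  hf.injective_comp_right.comp hE

theorem exact_mulVec_submatrix_equiv [Fintype ι] [Fintype ι']
    (hEH : Function.Exact E.mulVec H.mulVec) (e : ι' ≃ ι) :
    Function.Exact (E.submatrix e id).mulVec (H.submatrix id e).mulVec := by
  intro v
  rw [submatrix_mulVec_equiv, Function.comp_id, hEH]
  exact exists_congr fun u => e.eq_comp_symm _ _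

end Reindex

section SystematicCode

variable {n k : ℕ} (hkn : k ≤ n) (P : Matrix (Fin (n - k)) (Fin k) (ZMod 2))

/-- The splitting of the `n` code positions into the first `k` (information) positions and the
last `n - k` (parity) positions. -/
def positionEquiv : Fin n ≃ Fin k ⊕ Fin (n - k) :=
  (finCongr (Nat.add_sub_of_le hkn).symm).trans finSumFinEquiv.symm

theorem Gpre_eq_submatrix_fromRows :
    Gpre hkn P = (fromRows 1 P).submatrix (positionEquiv hkn) id := by
  ext a b
  obtain ⟨i | i, rfl⟩ := (positionEquiv hkn).symm.surjective a
  · simp [Gpre, positionEquiv, one_apply, Fin.ext_iff]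
  · simp [Gpre, positionEquiv]

theorem Hmat_eq_submatrix_fromCols :
    Hmat hkn P = (fromCols P 1).submatrix id (positionEquiv hkn) := by
  ext a b
  obtain ⟨j | j, rfl⟩ := (positionEquiv hkn).symm.surjective b
  · simp [Hmat, positionEquiv]
  · simp [Hmat, positionEquiv, one_apply, Fin.ext_iff, eq_comm]

theorem mulVec_Gpre_injective : Function.Injective (Gpre hkn P).mulVec := by
  rw [Gpre_eq_submatrix_fromRows]
  exact mulVec_submatrix_injective (mulVec_fromRows_one_injective P) (Equiv.surjective _)

theorem exact_mulVec_Gpre_Hmat : Function.Exact (Gpre hkn P).mulVec (Hmat hkn P).mulVec := by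
  have neg_P : -P = P := by ext; exact CharTwo.neg_eq _
  have hexact := exact_mulVec_fromRows_one_neg_fromCols_one P
  rw [neg_P] at hexact
  rw [Gpre_eq_submatrix_fromRows, Hmat_eq_submatrix_fromCols]
  exact exact_mulVec_submatrix_equiv hexact _

end SystematicCode

/-- Lemma 1: for every `m × n` matrix `G_LT` over GF(2), the
`(m+n−k) × n` matrix obtained by stacking `G_LT` on top of `H` has rank `n` if and
only if the `m × k` matrix `G_LT * G_pre` has rank `k`. -/
theorem stack_full_rank_iff_product_full_rank
    (n k m : ℕ) (hk : 1 ≤ k) (hkn : k ≤ n) (hm : 1 ≤ m)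
    (P : Matrix (Fin (n - k)) (Fin k) (ZMod 2))
    (G : Matrix (Fin m) (Fin n) (ZMod 2)) :
    (Matrix.fromRows G (Hmat hkn P)).rank = n ↔ (G * Gpre hkn P).rank = k := by
  simpa using stack_full_rank_iff_product_full_rank_general
    (mulVec_Gpre_injective hkn P) (exact_mulVec_Gpre_Hmat hkn P) G
end
end

section
/- Let 1 ≤ k ≤ n and m ≥ 1. Let B be any fixed n×k matrix over GF(2) with rank(B) = k, and let G be a random m×n matrix over GF(2) whose rows are i.i.d. and uniformly distributed over the 2^n − 1 nonzero vectors of GF(2)^n. Then the probability that the m×k product matrix G·B has rank k is at least 1 − (2^k − 1) · ((2^{n−1} − 1)/(2^n − 1))^m. -/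
open Finset

noncomputable section

/-- Probability of a particular `m × n` matrix over GF(2) whose rows are i.i.d. and
uniform over the `2^n − 1` nonzero vectors of `GF(2)^n`. -/
def unifNZProb (n : ℕ) {m : ℕ} (G : Matrix (Fin m) (Fin n) (ZMod 2)) : ℝ :=
  ∏ i : Fin m, if G i = 0 then 0 else 1 / ((2 : ℝ) ^ n - 1)

/-!
The product `G * B` fails to have full column rank exactly when it kills a nonzero vector `v`, that
is, when every row of `G` is orthogonal to `B *ᵥ v`. As `B` is injective, `B *ᵥ v ≠ 0`, so exactly
`q ^ (n - 1)` vectors are orthogonal to it over a field with `q` elements, `q ^ (n - 1) - 1` of them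
nonzero. By independence of the rows the failure at `v` has probability
`((q ^ (n - 1) - 1) / (q ^ n - 1)) ^ m`. This event depends only on the line spanned by `v`, so a
union bound over the `(q ^ k - 1) / (q - 1)` points of projective space suffices.
-/

open scoped Matrix LinearAlgebra.Projectivization

section LinearAlgebra

theorem card_filter_dual_eq_zero {K V : Type*} [Field K] [Fintype K] [DecidableEq K]
    [AddCommGroup V] [Module K V] [Fintype V] {f : Module.Dual K V} (hf : f ≠ 0) :
    #{v | f v = 0} = Fintype.card K ^ (Module.finrank K V - 1) := by
  have hker : Module.finrank K (LinearMap.ker f) = Module.finrank K V - 1 :=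
    Nat.eq_sub_of_add_eq (Module.Dual.finrank_ker_add_one_of_ne_zero hf)
  rw [← hker, ← Nat.card_eq_fintype_card, ← Module.natCard_eq_pow_finrank,
    ← Fintype.card_subtype, ← Nat.card_eq_fintype_card]
  rfl

theorem card_filter_dotProduct_eq_zero {K n : Type*} [Field K] [Fintype K] [DecidableEq K]
    [Fintype n] [DecidableEq n] {w : n → K} (hw : w ≠ 0) :
    #{g | g ⬝ᵥ w = 0} = Fintype.card K ^ (Fintype.card n - 1) := by
  have hf : dotProductEquiv K n w ≠ 0 := (LinearEquiv.map_ne_zero_iff _).mpr hw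
  simpa [dotProduct_comm w] using card_filter_dual_eq_zero hf

theorem rank_eq_card_iff_mulVec_injective {R m n : Type*} [CommRing R] [Nontrivial R] [Fintype n]
    {A : Matrix m n R} : A.rank = Fintype.card n ↔ Function.Injective A.mulVec := by
  rw [Matrix.mulVec_injective_iff, linearIndependent_iff_card_eq_finrank_span,
    A.rank_eq_finrank_span_cols, eq_comm, Set.finrank]

variable {K m n : Type*} [Field K] [Fintype n]

theorem exists_mulVec_rep_eq_zero_of_rank_ne {A : Matrix m n K} (hA : A.rank ≠ Fintype.card n) :
    ∃ p : ℙ K (n → K), A *ᵥ p.rep = 0 := by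
  have hker : ¬ ∀ v, A.mulVecLin v = 0 → v = 0 := by
    rwa [← injective_iff_map_eq_zero, Matrix.coe_mulVecLin, ← rank_eq_card_iff_mulVec_injective]
  push Not at hker
  obtain ⟨v, hAv, hv⟩ := hker
  obtain ⟨a, ha⟩ := Projectivization.exists_smul_eq_mk_rep K v hv
  refine ⟨.mk K v hv, ?_⟩
  rw [← ha, Matrix.mulVec_smul, ← Matrix.mulVecLin_apply, hAv, smul_zero]

theorem card_projectivization_pi [Fintype K] [Fintype (ℙ K (n → K))] :
    (Fintype.card (ℙ K (n → K)) : ℝ) =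
      ((Fintype.card K : ℝ) ^ Fintype.card n - 1) / (Fintype.card K - 1) := by
  have hq : (Fintype.card K : ℝ) - 1 ≠ 0 :=
    sub_ne_zero.mpr (by exact_mod_cast Fintype.one_lt_card.ne')
  have hcard := congrArg (Nat.cast (R := ℝ)) (Projectivization.card' K (n → K))
  simp only [Nat.card_fun, Nat.card_eq_fintype_card, Nat.cast_pow, Nat.cast_add, Nat.cast_mul,
    Nat.cast_pred Fintype.card_pos, Nat.cast_one] at hcard
  rw [eq_div_iff hq, hcard, add_sub_cancel_right]

end LinearAlgebra

section FiniteProbability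

theorem one_sub_sum_le_sum_filter {α ι : Type*} [Fintype α] [Fintype ι] {w : α → ℝ}
    (hw₀ : ∀ x, 0 ≤ w x) (hw₁ : ∑ x, w x = 1) {good : α → Prop} {bad : ι → α → Prop}
    [DecidablePred good] [∀ i, DecidablePred (bad i)] (hbad : ∀ x, ¬ good x → ∃ i, bad i x) :
    1 - ∑ i, ∑ x with bad i x, w x ≤ ∑ x with good x, w x := by
  have hunion : ∑ x with ¬ good x, w x ≤ ∑ i, ∑ x with bad i x, w x := by
    simp only [sum_filter]
    rw [sum_comm]
    refine sum_le_sum fun x _ => ?_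
    have hterm : ∀ i, 0 ≤ if bad i x then w x else 0 := fun i => by split_ifs <;> simp [hw₀]
    by_cases hx : good x
    · simpa [hx] using sum_nonneg fun i _ => hterm i
    · obtain ⟨i, hi⟩ := hbad x hx
      simpa [hx, hi] using single_le_sum (fun j _ => hterm j) (mem_univ i)
  linarith [sum_filter_add_sum_filter_not univ good w]

/-- The probability of the family `x` when its entries are drawn independently, each with
probability mass function `p`. -/
def iidProb {ι α : Type*} [Fintype ι] (p : α → ℝ) (x : ι → α) : ℝ :=
  ∏ i, p (x i)

section IidProb

variable {ι α : Type*} [Fintype ι] {p : α → ℝ}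

theorem iidProb_nonneg (hp : ∀ a, 0 ≤ p a) (x : ι → α) : 0 ≤ iidProb p x :=
  prod_nonneg fun i _ => hp (x i)

variable [DecidableEq ι] [Fintype α]

theorem sum_iidProb_filter_forall (p : α → ℝ) (P : α → Prop) [DecidablePred P] :
    ∑ x : ι → α with ∀ i, P (x i), iidProb p x = (∑ a with P a, p a) ^ Fintype.card ι := by
  have hbox : ({x | ∀ i, P (x i)} : Finset (ι → α)) = Fintype.piFinset fun _ => {a | P a} := by
    ext x
    simp
  rw [hbox]
  simp only [iidProb, sum_prod_piFinset, prod_const, card_univ]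

theorem sum_iidProb (hp : ∑ a, p a = 1) : ∑ x : ι → α, iidProb p x = 1 := by
  simpa [hp] using sum_iidProb_filter_forall (ι := ι) p fun _ => True

end IidProb

/-- The probability mass function of the uniform distribution on the nonzero elements of `V`; it is
identically `0` if there are none. -/
def uniformNonzeroProb {V : Type*} [Fintype V] [Zero V] [DecidableEq V] (x : V) : ℝ :=
  if x = 0 then 0 else 1 / ((Fintype.card V : ℝ) - 1)

section UniformNonzeroProb

variable {V : Type*} [Fintype V] [Zero V] [DecidableEq V]

theorem uniformNonzeroProb_nonneg (x : V) : 0 ≤ uniformNonzeroProb x := by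
  have hcard : (1 : ℝ) ≤ Fintype.card V := by exact_mod_cast Fintype.card_pos_iff.mpr ⟨x⟩
  unfold uniformNonzeroProb
  split_ifs
  · exact le_rfl
  · exact one_div_nonneg.mpr (sub_nonneg.mpr hcard)

theorem sum_uniformNonzeroProb_of_zero_mem {s : Finset V} (hs : 0 ∈ s) :
    ∑ x ∈ s, uniformNonzeroProb x = ((#s : ℝ) - 1) / ((Fintype.card V : ℝ) - 1) := by
  have hne : ∀ x ∈ s.erase 0, uniformNonzeroProb x = 1 / ((Fintype.card V : ℝ) - 1) :=
    fun x hx => if_neg (ne_of_mem_erase hx)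
  rw [← add_sum_erase s _ hs, sum_congr rfl hne, sum_const, nsmul_eq_mul, cast_card_erase_of_mem hs]
  simp [uniformNonzeroProb, div_eq_mul_inv]

theorem sum_uniformNonzeroProb [Nontrivial V] : ∑ x : V, uniformNonzeroProb x = 1 := by
  have hcard : (Fintype.card V : ℝ) - 1 ≠ 0 :=
    sub_ne_zero.mpr (by exact_mod_cast Fintype.one_lt_card.ne')
  rw [sum_uniformNonzeroProb_of_zero_mem (mem_univ 0), card_univ, div_self hcard]

end UniformNonzeroProb

end FiniteProbability

section RandomMatrix

theorem sum_iidProb_filter_mulVec_eq_zero {R m n : Type*} [NonUnitalNonAssocSemiring R]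
    [Fintype R] [DecidableEq R] [Fintype m] [DecidableEq m] [Fintype n] [DecidableEq n]
    (p : (n → R) → ℝ) (w : n → R) :
    ∑ G : Matrix m n R with G *ᵥ w = 0, iidProb p G =
      (∑ g with g ⬝ᵥ w = 0, p g) ^ Fintype.card m := by
  simp only [funext_iff]
  exact sum_iidProb_filter_forall p fun g => g ⬝ᵥ w = 0

variable {K m n k : Type*} [Field K] [Fintype K] [DecidableEq K]
  [Fintype m] [DecidableEq m] [Fintype n] [DecidableEq n] [Fintype k]

theorem one_sub_sum_pow_le_sum_iidProb_rank_mul_eq [Fintype (ℙ K (k → K))] {p : (n → K) → ℝ}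
    (hp₀ : ∀ g, 0 ≤ p g) (hp₁ : ∑ g, p g = 1) (B : Matrix n k K) :
    1 - ∑ v : ℙ K (k → K), (∑ g with g ⬝ᵥ (B *ᵥ v.rep) = 0, p g) ^ Fintype.card m ≤
      ∑ G : Matrix m n K with (G * B).rank = Fintype.card k, iidProb p G := by
  simp only [← sum_iidProb_filter_mulVec_eq_zero, Matrix.mulVec_mulVec]
  exact one_sub_sum_le_sum_filter (iidProb_nonneg hp₀) (sum_iidProb hp₁)
    fun G hG => exists_mulVec_rep_eq_zero_of_rank_ne hG

theorem sum_uniformNonzeroProb_filter_dotProduct_eq_zero {w : n → K} (hw : w ≠ 0) :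
    ∑ g with g ⬝ᵥ w = 0, uniformNonzeroProb g =
      ((Fintype.card K : ℝ) ^ (Fintype.card n - 1) - 1) /
        ((Fintype.card K : ℝ) ^ Fintype.card n - 1) := by
  rw [sum_uniformNonzeroProb_of_zero_mem (by simp), card_filter_dotProduct_eq_zero hw,
    Fintype.card_fun]
  push_cast
  rfl

theorem uniform_rows_product_full_rank_lower_bound_general [Nonempty n]
    (B : Matrix n k K) (hB : B.rank = Fintype.card k) :
    1 - ((Fintype.card K : ℝ) ^ Fintype.card k - 1) / (Fintype.card K - 1) *
        (((Fintype.card K : ℝ) ^ (Fintype.card n - 1) - 1) /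
          ((Fintype.card K : ℝ) ^ Fintype.card n - 1)) ^ Fintype.card m ≤
      ∑ G : Matrix m n K with (G * B).rank = Fintype.card k, iidProb uniformNonzeroProb G := by
  have := Fintype.ofFinite (ℙ K (k → K))
  have hBv : ∀ v : ℙ K (k → K), B *ᵥ v.rep ≠ 0 := fun v h =>
    v.rep_nonzero (rank_eq_card_iff_mulVec_injective.mp hB (h.trans B.mulVec_zero.symm))
  have hbound := one_sub_sum_pow_le_sum_iidProb_rank_mul_eq (m := m)
    uniformNonzeroProb_nonneg sum_uniformNonzeroProb B
  simpa only [sum_uniformNonzeroProb_filter_dotProduct_eq_zero (hBv _), sum_const, card_univ,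
    nsmul_eq_mul, card_projectivization_pi] using hbound

end RandomMatrix

theorem unifNZProb_eq_iidProb {m n : ℕ} (G : Matrix (Fin m) (Fin n) (ZMod 2)) :
    unifNZProb n G = iidProb uniformNonzeroProb G := by
  simp [unifNZProb, iidProb, uniformNonzeroProb]

/-- for any fixed `n × k` matrix `B` over GF(2) with `rank B = k` and a
random `m × n` matrix `G` whose rows are i.i.d. uniform over the nonzero vectors of
`GF(2)^n`, the probability that `G * B` has rank `k` is at least
`1 − (2^k − 1) ((2^{n−1} − 1)/(2^n − 1))^m`. -/
theorem uniform_rows_product_full_rank_lower_bound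
    (n k m : ℕ) (hk : 1 ≤ k) (hkn : k ≤ n) (hm : 1 ≤ m)
    (B : Matrix (Fin n) (Fin k) (ZMod 2)) (hB : B.rank = k) :
    1 - ((2 : ℝ) ^ k - 1) * (((2 : ℝ) ^ (n - 1) - 1) / ((2 : ℝ) ^ n - 1)) ^ m
      ≤ ∑ G : Matrix (Fin m) (Fin n) (ZMod 2),
          if (G * B).rank = k then unifNZProb n G else 0 := by
  have : NeZero n := ⟨Nat.one_le_iff_ne_zero.mp (hk.trans hkn)⟩
  have hq : (2 : ℝ) - 1 = 1 := by norm_num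
  rw [← sum_filter]
  simpa [unifNZProb_eq_iidProb, hq] using
    uniform_rows_product_full_rank_lower_bound_general (m := Fin m) B (by simpa using hB)
end
end
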